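/- Let R_1, R_2, R_3 be complex rotations and c_1, c_2, c_3 ∈ ℂ³, with essential matrices E_ij = R_i * [c_j − c_i]_× * (R_j)ᵀ for all i ≠ j (so E_ji = (E_ij)ᵀ). Define the diamond operation on 3×3 complex matrices by A ⋄ B := adj(A − B) − adj(A) − adj(B). Then for all pairwise distinct i, j, k ∈ {1,2,3}: (E_jk)ᵀ * adj(E_ij) + adj(E_jk) * (E_ij)ᵀ + (E_ij * E_jk) ⋄ (E_ki)ᵀ = 0. -/

import Mathlib

open Matrix

/-- The skew-symmetric "hat" matrix `[c]ₓ` of `c ∈ ℂ³`, so that `[c]ₓ v = c × v`. -/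
def crossMat (c : Fin 3 → ℂ) : Matrix (Fin 3) (Fin 3) ℂ :=
  !![0, -c 2, c 1; c 2, 0, -c 0; -c 1, c 0, 0]

/-- Martyushev's "diamond" operation `A ⋄ B = adj(A − B) − adj(A) − adj(B)`. -/
def diamond (A B : Matrix (Fin 3) (Fin 3) ℂ) : Matrix (Fin 3) (Fin 3) ℂ :=
  (A - B).adjugate - A.adjugate - B.adjugate


lemma core (a b : Fin 3 → ℂ) :
    (crossMat b)ᵀ * (crossMat a).adjugate + (crossMat b).adjugate * (crossMat a)ᵀ
      + diamond (crossMat a * crossMat b) (crossMat (a + b)) = 0 := by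
  unfold diamond
  rw [adjugate_fin_three, adjugate_fin_three, adjugate_fin_three, adjugate_fin_three,
    adjugate_fin_three]
  ext i j
  fin_cases i <;> fin_cases j <;>
    simp [crossMat, Matrix.mul_apply, Matrix.vecMul, dotProduct, Fin.sum_univ_three] <;> ring

lemma adj_rot {R : Matrix (Fin 3) (Fin 3) ℂ} (h : R * Rᵀ = 1) (hd : R.det = 1) :
    R.adjugate = Rᵀ := by
  calc R.adjugate = R.adjugate * (R * Rᵀ) := by rw [h, mul_one]
    _ = Rᵀ := by rw [← mul_assoc, adjugate_mul, hd, one_smul, one_mul]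

lemma adj_conj {R S : Matrix (Fin 3) (Fin 3) ℂ} (h : R * Rᵀ = 1) (hd : R.det = 1)
    (h' : S * Sᵀ = 1) (hd' : S.det = 1) (X : Matrix (Fin 3) (Fin 3) ℂ) :
    (R * X * Sᵀ).adjugate = S * X.adjugate * Rᵀ := by
  rw [adjugate_mul_distrib, adjugate_mul_distrib, ← adjugate_transpose, adj_rot h hd,
    adj_rot h' hd', transpose_transpose, mul_assoc]

/-- Martyushev's necessary condition (2.18) for compatible essential matrix triples. -/
theorem stmt14 (R : Fin 3 → Matrix (Fin 3) (Fin 3) ℂ) (c : Fin 3 → Fin 3 → ℂ)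
    (hR : ∀ i, R i * (R i)ᵀ = 1) (hdR : ∀ i, (R i).det = 1)
    (E : Fin 3 → Fin 3 → Matrix (Fin 3) (Fin 3) ℂ)
    (hE : ∀ i j, E i j = R i * crossMat (c j - c i) * (R j)ᵀ) :
    ∀ i j k : Fin 3, i ≠ j → j ≠ k → i ≠ k →
      (E j k)ᵀ * (E i j).adjugate + (E j k).adjugate * (E i j)ᵀ
        + diamond (E i j * E j k) ((E k i)ᵀ) = 0 := by
  intro i j k _ _ _
  have hR' : ∀ i, (R i)ᵀ * R i = 1 := fun i => mul_eq_one_comm.mp (hR i)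
  have hc : ∀ j (X : Matrix (Fin 3) (Fin 3) ℂ), (R j)ᵀ * (R j * X) = X := fun j X => by
    rw [← mul_assoc, hR', one_mul]
  obtain ⟨a, ha⟩ : ∃ a, a = c j - c i := ⟨_, rfl⟩
  obtain ⟨b, hb⟩ : ∃ b, b = c k - c j := ⟨_, rfl⟩
  have e1 : E i j = R i * crossMat a * (R j)ᵀ := by rw [hE, ha]
  have e2 : E j k = R j * crossMat b * (R k)ᵀ := by rw [hE, hb]
  have e3 : (E k i)ᵀ = R i * crossMat (a + b) * (R k)ᵀ := by
    have : (crossMat (c i - c k))ᵀ = crossMat (a + b) := by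
      rw [ha, hb]
      ext p q
      fin_cases p <;> fin_cases q <;> simp [crossMat]
    rw [hE, transpose_mul, transpose_mul, transpose_transpose, this, mul_assoc]
  have e4 : E i j * E j k = R i * (crossMat a * crossMat b) * (R k)ᵀ := by
    rw [e1, e2]; simp only [mul_assoc, hc]
  have e5 : diamond (E i j * E j k) ((E k i)ᵀ)
      = R k * diamond (crossMat a * crossMat b) (crossMat (a + b)) * (R i)ᵀ := by
    unfold diamond
    rw [e4, e3, ← sub_mul, ← mul_sub]
    simp only [adj_conj (hR i) (hdR i) (hR k) (hdR k)]
    rw [mul_sub (R k), mul_sub (R k), sub_mul, sub_mul]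
  have e6 : (E j k)ᵀ * (E i j).adjugate
      = R k * ((crossMat b)ᵀ * (crossMat a).adjugate) * (R i)ᵀ := by
    rw [e1, e2, adj_conj (hR i) (hdR i) (hR j) (hdR j)]
    simp only [transpose_mul, transpose_transpose, mul_assoc, hc]
  have e7 : (E j k).adjugate * (E i j)ᵀ
      = R k * ((crossMat b).adjugate * (crossMat a)ᵀ) * (R i)ᵀ := by
    rw [e1, e2, adj_conj (hR j) (hdR j) (hR k) (hdR k)]
    simp only [transpose_mul, transpose_transpose, mul_assoc, hc]
  rw [e5, e6, e7, ← add_mul, ← mul_add, ← add_mul, ← mul_add, core, mul_zero, zero_mul]
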